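/- For every integer n ≥ 1 and every real ξ with |ξ| ≤ 2^{n−1} π, one has |sin(ξ)/ξ| ≤ ∏_{j=1}^n |cos(2^{−j} ξ)| ≤ (π/2) · |sin(ξ)/ξ|, where sin(ξ)/ξ is interpreted as 1 at ξ = 0. -/

import Mathlib

open scoped Real

lemma aux_prod (n : ℕ) (ξ : ℝ) : |Real.sin ξ| = 2 ^ n * |Real.sin ((2 : ℝ) ^ (-(n : ℤ)) * ξ)| *
    ∏ j ∈ Finset.Icc 1 n, |Real.cos ((2 : ℝ) ^ (-(j : ℤ)) * ξ)| := by
  induction n with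
  | zero => simp
  | succ k ih =>
    rw [Finset.prod_Icc_succ_top (by omega), ih]
    have h : (2 : ℝ) ^ (-(k : ℤ)) * ξ = 2 * ((2 : ℝ) ^ (-((k + 1 : ℕ) : ℤ)) * ξ) := by
      have : (-(k : ℤ)) = 1 + (-((k + 1 : ℕ) : ℤ)) := by push_cast; ring
      rw [this, zpow_add₀ (by norm_num), zpow_one]; ring
    rw [h, Real.sin_two_mul, abs_mul, abs_mul, abs_two]
    ring

/-- Truncated Euler product bounds for the sinc function: for every integer `n ≥ 1`
and every real `ξ` with `|ξ| ≤ 2^{n-1} π`, one has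
`|sin ξ / ξ| ≤ ∏_{j=1}^n |cos(2^{-j} ξ)| ≤ (π/2) |sin ξ / ξ|`,
where `sin ξ / ξ` is interpreted as `1` at `ξ = 0`. -/
theorem euler_product_truncated_bounds (n : ℕ) (hn : 1 ≤ n) (ξ : ℝ)
    (hξ : |ξ| ≤ 2 ^ (n - 1) * π) :
    |if ξ = 0 then (1 : ℝ) else Real.sin ξ / ξ| ≤
        ∏ j ∈ Finset.Icc 1 n, |Real.cos ((2 : ℝ) ^ (-(j : ℤ)) * ξ)| ∧
      ∏ j ∈ Finset.Icc 1 n, |Real.cos ((2 : ℝ) ^ (-(j : ℤ)) * ξ)| ≤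
        π / 2 * |if ξ = 0 then (1 : ℝ) else Real.sin ξ / ξ| := by
  by_cases h0 : ξ = 0
  · subst h0
    simp
    linarith [Real.two_le_pi]
  rw [if_neg h0, abs_div, aux_prod n ξ]
  have hP : 0 ≤ ∏ j ∈ Finset.Icc 1 n, |Real.cos ((2 : ℝ) ^ (-(j : ℤ)) * ξ)| :=
    Finset.prod_nonneg fun _ _ => abs_nonneg _
  set P := ∏ j ∈ Finset.Icc 1 n, |Real.cos ((2 : ℝ) ^ (-(j : ℤ)) * ξ)|
  have hx : ξ = 2 ^ n * ((2 : ℝ) ^ (-(n : ℤ)) * ξ) := by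
    rw [zpow_neg, zpow_natCast]; field_simp
  set y := (2 : ℝ) ^ (-(n : ℤ)) * ξ
  have hxa : |ξ| = 2 ^ n * |y| := by
    conv_lhs => rw [hx]
    rw [abs_mul, abs_of_pos (by positivity : (0 : ℝ) < 2 ^ n)]
  have hpos : 0 < |ξ| := abs_pos.mpr h0
  have h2 : (0 : ℝ) < 2 ^ n := by positivity
  have hy : |y| ≤ π / 2 := by
    obtain ⟨m, rfl⟩ : ∃ m, n = m + 1 := ⟨n - 1, by omega⟩
    rw [hxa, Nat.add_sub_cancel, pow_succ, mul_assoc] at hξ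
    have := le_of_mul_le_mul_left hξ (by positivity)
    linarith
  have hl := Real.mul_abs_le_abs_sin hy
  have hu : |Real.sin y| ≤ |y| := Real.abs_sin_le_abs
  constructor
  · rw [div_le_iff₀ hpos, hxa, mul_comm P]
    gcongr
  · rw [← mul_div_assoc, le_div_iff₀ hpos, hxa]
    have : |y| ≤ π / 2 * |Real.sin y| := by
      calc |y| = π / 2 * (2 / π * |y|) := by field_simp
        _ ≤ _ := by gcongr
    calc P * (2 ^ n * |y|) ≤ P * (2 ^ n * (π / 2 * |Real.sin y|)) := by gcongr
      _ = _ := by ring
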